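/- Let N ≥ 2 be an integer and 0 < p < 1 real. Then the relative Fisher information of the Kravchuk polynomial of maximal degree n = N−1 satisfies (N−1)/(2 p (1−p)) · Σ_{k=0}^{N-2} ((2−N)_k/(3)_k) (p/(p−1))^k = ((1−p)^{1−N} + (1−N)p − 1)/(N p³); that is, I_ω[K_{N-1}^p(N)] = ((1−p)^{1−N} + (1−N)p − 1)/(N p³). -/

import Mathlib

/-!
The terminating binomial series is `∑ (-N)_i / (1)_i x ^ i = (1 - x) ^ N`. Since
`(a)_{2+k} = (a)_2 (a + 2)_k`, its terms of degree at least two are `(-N)_2 / (1)_2 x ^ 2` times the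
terms `(2 - N)_k / (3)_k x ^ k` of the Fisher information. At `x = p / (p - 1)` one has
`1 - x = (1 - p)⁻¹`.
-/

/-- Pochhammer symbol `(a)_k = a(a+1)⋯(a+k-1)`. -/
noncomputable def poch (a : ℝ) (k : ℕ) : ℝ := ∏ i ∈ Finset.range k, (a + i)

theorem poch_eq_ascPochhammer_eval (a : ℝ) (k : ℕ) : poch a k = (ascPochhammer ℝ k).eval a := by
  induction k with
  | zero => simp [poch]
  | succ k ih => rw [ascPochhammer_succ_eval, ← ih, poch, poch, Finset.prod_range_succ]

theorem poch_one_left (k : ℕ) : poch 1 k = k.factorial := by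
  rw [poch_eq_ascPochhammer_eval, ascPochhammer_eval_one]

theorem poch_neg_natCast (N k : ℕ) : poch (-N) k = (-1) ^ k * N.descFactorial k := by
  rw [poch_eq_ascPochhammer_eval, ascPochhammer_eval_neg_eq_descPochhammer,
    descPochhammer_eval_eq_descFactorial]

theorem poch_add (a : ℝ) (j k : ℕ) : poch a (j + k) = poch a j * poch (a + j) k := by
  simp only [poch, Finset.prod_range_add, Nat.cast_add, add_assoc]

theorem poch_div_poch_add (a b : ℝ) (j k : ℕ) :
    poch a (j + k) / poch b (j + k) =
      poch a j / poch b j * (poch (a + j) k / poch (b + j) k) := by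
  rw [poch_add, poch_add, mul_div_mul_comm]

theorem poch_neg_natCast_div_poch_one (N k : ℕ) :
    poch (-N) k / poch 1 k = (-1) ^ k * N.choose k := by
  have hk : (k.factorial : ℝ) ≠ 0 := Nat.cast_ne_zero.mpr k.factorial_ne_zero
  rw [poch_neg_natCast, poch_one_left, Nat.descFactorial_eq_factorial_mul_choose, Nat.cast_mul,
    mul_div_assoc, mul_div_cancel_left₀ _ hk]

theorem sum_poch_neg_natCast_div_poch_one_mul_pow (N : ℕ) (x : ℝ) :
    ∑ k ∈ Finset.range (N + 1), poch (-N) k / poch 1 k * x ^ k = (1 - x) ^ N := by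
  rw [sub_eq_neg_add, add_pow]
  refine Finset.sum_congr rfl fun k _ => ?_
  rw [poch_neg_natCast_div_poch_one, neg_pow x, one_pow]
  ring

theorem sum_poch_two_sub_div_poch_three_mul_pow (N : ℕ) (x : ℝ) :
    (N : ℝ) * (N - 1) * x ^ 2 *
        ∑ k ∈ Finset.range (N - 1), poch (2 - N) k / poch 3 k * x ^ k =
      2 * ((1 - x) ^ N - 1 + N * x) := by
  obtain rfl | hN := eq_or_ne N 0
  · simp
  have hshift (k : ℕ) : poch (-N) (2 + k) / poch 1 (2 + k) * x ^ (2 + k) =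
      (N : ℝ) * (N - 1) / 2 * x ^ 2 * (poch (2 - N) k / poch 3 k * x ^ k) := by
    rw [poch_div_poch_add, poch_neg_natCast_div_poch_one, Nat.cast_choose_two, Nat.cast_two,
      neg_add_eq_sub, show (1 : ℝ) + 2 = 3 by norm_num]
    ring
  have hhead : ∑ k ∈ Finset.range 2, poch (-N) k / poch 1 k * x ^ k = 1 - N * x := by
    simp [Finset.sum_range_succ, poch_neg_natCast_div_poch_one, sub_eq_add_neg]
  have hsum := sum_poch_neg_natCast_div_poch_one_mul_pow N x
  rw [show N + 1 = 2 + (N - 1) by lia, Finset.sum_range_add, hhead,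
    Finset.sum_congr rfl fun k _ => hshift k, ← Finset.mul_sum] at hsum
  linear_combination 2 * hsum

theorem kravchuk_fisher_maximal_degree_general
    {N : ℕ} (hN : N ≠ 0) {p : ℝ} (hp0 : p ≠ 0) (hp1 : p ≠ 1) :
    ((N : ℝ) - 1) / (2 * p * (1 - p)) *
      ∑ k ∈ Finset.range (N - 1),
        poch (2 - (N : ℝ)) k / poch 3 k * (p / (p - 1)) ^ k
    = ((1 - p) ^ ((1 : ℤ) - (N : ℤ)) + (1 - (N : ℝ)) * p - 1) / ((N : ℝ) * p ^ 3) := by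
  have hq : 1 - p ≠ 0 := sub_ne_zero.mpr hp1.symm
  have hx : p / (p - 1) = -(p / (1 - p)) := by rw [← neg_sub 1 p, div_neg]
  have hone_sub : 1 - -(p / (1 - p)) = (1 - p)⁻¹ := by field_simp; ring
  have hsum := sum_poch_two_sub_div_poch_three_mul_pow N (p / (p - 1))
  rw [hx, hone_sub, inv_pow] at hsum
  rw [hx, zpow_sub₀ hq, zpow_one, zpow_natCast]
  field_simp at hsum ⊢
  linear_combination hsum

/-- The relative Fisher information of the monic Kravchuk polynomial of maximal
degree `n = N-1` equals `((1-p)^{1-N} + (1-N)p - 1)/(N p³)`. -/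
theorem kravchuk_fisher_maximal_degree
    (N : ℕ) (hN : 2 ≤ N) (p : ℝ) (hp0 : 0 < p) (hp1 : p < 1) :
    ((N : ℝ) - 1) / (2 * p * (1 - p)) *
      ∑ k ∈ Finset.range (N - 1),
        poch (2 - (N : ℝ)) k / poch 3 k * (p / (p - 1)) ^ k
    = ((1 - p) ^ ((1 : ℤ) - (N : ℤ)) + (1 - (N : ℝ)) * p - 1) / ((N : ℝ) * p ^ 3) :=
  kravchuk_fisher_maximal_degree_general (by lia) hp0.ne' hp1.ne
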